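/- Let d ≥ 2, k ≥ 1 and ℓ : Fin k → ℝ with ℓ i > 0 for all i, let φ be the work map of the open k-chain, and define F : (S^{d-1})^k → ℝ by F(u) = ‖φ(u)‖². For every u with φ(u) ≠ 0, the manifold derivative (mfderiv) of F at u is the zero map if and only if u is aligned. -/

import Mathlib

open scoped Manifold BigOperators
open Metric

/-!
The differential of `‖f‖²` at `x` is `2⟪f x, f' ·⟫`, so it vanishes exactly when `f x` is
orthogonal to the range of `f'`. For the work map this range is spanned by the ranges of the
partial derivatives, and since `ℓ i ≠ 0` the `i`-th of these is the tangent space `(ℝ ∙ u i)ᗮ` of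
the sphere. Thus `u` is critical exactly when `φ u` lies on every line `ℝ ∙ u i`. A nonzero vector
lying on all these lines forces `u i = ± φ u / ‖φ u‖`; conversely, if the `u i` all span one line,
then `φ u`, being a linear combination of them, lies on it.
-/

open NormedSpace Filter

section LinearAlgebra

theorem range_sum_comp_proj {R ι F : Type*} {E : ι → Type*} [Semiring R] [Fintype ι]
    [∀ i, AddCommMonoid (E i)] [∀ i, Module R (E i)] [∀ i, TopologicalSpace (E i)]
    [AddCommMonoid F] [Module R F] [TopologicalSpace F] [ContinuousAdd F]
    (L : ∀ i, E i →L[R] F) :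
    (∑ i, L i ∘L ContinuousLinearMap.proj i).range = ⨆ i, (L i).range := by
  classical
  refine le_antisymm ?_ (iSup_le fun i ↦ ?_)
  · rintro _ ⟨x, rfl⟩
    simpa using Submodule.sum_mem_iSup fun i ↦ LinearMap.mem_range_self (L i).toLinearMap (x i)
  · rintro _ ⟨y, rfl⟩
    refine ⟨Pi.single i y, ?_⟩
    suffices ∑ j, L j (Pi.single i y j) = L i y by simpa using this
    rw [Fintype.sum_eq_single i fun j hj ↦ by simp [hj], Pi.single_eq_same]

theorem mem_orthogonal_range_sum_comp_proj_iff {𝕜 ι F : Type*} {E : ι → Type*} [RCLike 𝕜]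
    [Fintype ι] [∀ i, AddCommMonoid (E i)] [∀ i, Module 𝕜 (E i)] [∀ i, TopologicalSpace (E i)]
    [NormedAddCommGroup F] [InnerProductSpace 𝕜 F] {L : ∀ i, E i →L[𝕜] F} {x : F} :
    x ∈ (∑ i, L i ∘L ContinuousLinearMap.proj i).rangeᗮ ↔ ∀ i, x ∈ (L i).rangeᗮ := by
  rw [range_sum_comp_proj, ← Submodule.iInf_orthogonal, Submodule.mem_iInf]

theorem innerSL_comp_eq_zero_iff {𝕜 E F : Type*} [RCLike 𝕜] [NormedAddCommGroup E]
    [InnerProductSpace 𝕜 E] [AddCommMonoid F] [TopologicalSpace F] [Module 𝕜 F]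
    {x : E} {T : F →L[𝕜] E} : innerSL 𝕜 x ∘L T = 0 ↔ x ∈ T.rangeᗮ := by
  simp [Submodule.mem_orthogonal', ContinuousLinearMap.ext_iff]

end LinearAlgebra

section PiManifold

variable {𝕜 : Type*} [NontriviallyNormedField 𝕜] {ι : Type*} [Fintype ι]
  {E : ι → Type*} [∀ i, NormedAddCommGroup (E i)] [∀ i, NormedSpace 𝕜 (E i)]
  {H : ι → Type*} [∀ i, TopologicalSpace (H i)] {I : ∀ i, ModelWithCorners 𝕜 (E i) (H i)}
  {M : ι → Type*} [∀ i, TopologicalSpace (M i)] [∀ i, ChartedSpace (H i) (M i)]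
  {F : Type*} [NormedAddCommGroup F] [NormedSpace 𝕜 F]

theorem extChartAt_pi (x : ∀ i, M i) :
    extChartAt (ModelWithCorners.pi I) x = PartialEquiv.pi fun i ↦ extChartAt (I i) (x i) := by
  refine PartialEquiv.ext (fun _ ↦ rfl) (fun _ ↦ rfl) ?_
  simp only [extChartAt_source, PartialEquiv.pi_source]
  rfl

theorem hasMFDerivAt_eval (x : ∀ i, M i) (i : ι) :
    HasMFDerivAt (ModelWithCorners.pi I) (I i) (fun y : ∀ i, M i ↦ y i) x
      (ContinuousLinearMap.proj (R := 𝕜) (φ := E) i) := by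
  refine ⟨(continuous_apply i).continuousAt, ?_⟩
  have hchart : ∀ z ∈ (extChartAt (ModelWithCorners.pi I) x).target,
      writtenInExtChartAt (ModelWithCorners.pi I) (I i) x (fun y : ∀ i, M i ↦ y i) z =
        ContinuousLinearMap.proj (R := 𝕜) (φ := E) i z := by
    intro z hz
    rw [extChartAt_pi] at hz
    exact (extChartAt (I i) (x i)).right_inv (hz i trivial)
  exact (ContinuousLinearMap.hasFDerivWithinAt _).congr_of_eventuallyEq
    (eventually_of_mem (extChartAt_target_mem_nhdsWithin x) hchart)
    (hchart _ (mem_extChartAt_target x))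

theorem hasMFDerivAt_sum_eval {f : ∀ i, M i → F} {x : ∀ i, M i}
    {f' : ∀ i, TangentSpace (I i) (x i) →L[𝕜] F}
    (hf : ∀ i, HasMFDerivAt (I i) 𝓘(𝕜, F) (f i) (x i) (f' i)) :
    HasMFDerivAt (ModelWithCorners.pi I) 𝓘(𝕜, F) (fun y : ∀ i, M i ↦ ∑ i, f i (y i)) x
      (∑ i, (f' i : E i →L[𝕜] F) ∘L ContinuousLinearMap.proj i) := by
  have hsummand i := (hf i).comp x (hasMFDerivAt_eval x i)
  exact ⟨tendsto_finsetSum _ fun i _ ↦ (hsummand i).1,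
    HasFDerivWithinAt.fun_sum fun i _ ↦ (hsummand i).2⟩

end PiManifold

section NormSq

variable {E H M F : Type*} [NormedAddCommGroup E] [NormedSpace ℝ E] [TopologicalSpace H]
  {I : ModelWithCorners ℝ E H} [TopologicalSpace M] [ChartedSpace H M]
  [NormedAddCommGroup F] [InnerProductSpace ℝ F]
  {f : M → F} {x : M} {f' : TangentSpace I x →L[ℝ] F}

theorem hasMFDerivAt_norm_sq (hf : HasMFDerivAt I 𝓘(ℝ, F) f x f') :
    HasMFDerivAt I 𝓘(ℝ, ℝ) (fun y ↦ ‖f y‖ ^ 2) x ((2 : ℝ) • innerSL ℝ (f x) ∘L f') := by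
  have hcomp := (hasStrictFDerivAt_norm_sq (f x)).hasFDerivAt.hasMFDerivAt.comp x hf
  rwa [← Nat.cast_smul_eq_nsmul ℝ] at hcomp

theorem mfderiv_norm_sq_eq_zero_iff (hf : HasMFDerivAt I 𝓘(ℝ, F) f x f') :
    mfderiv I 𝓘(ℝ, ℝ) (fun y ↦ ‖f y‖ ^ 2) x = 0 ↔ f x ∈ f'.rangeᗮ := by
  rw [(hasMFDerivAt_norm_sq hf).mfderiv, ← innerSL_comp_eq_zero_iff]
  exact smul_eq_zero_iff_right two_ne_zero

end NormSq

section Aligned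

/-- A family of vectors is aligned if all its members agree up to sign with a common unit vector.
For a tuple of points of a sphere, apply it to the coercions to the ambient space. -/
def IsAligned {ι V : Type*} [NormedAddCommGroup V] (v : ι → V) : Prop :=
  ∃ w, ‖w‖ = 1 ∧ ∀ i, v i = w ∨ v i = -w

variable {ι V : Type*} [NormedAddCommGroup V] [NormedSpace ℝ V] {v : ι → V} {x y : V}

theorem normalize_eq_or_eq_neg_of_mem_span_singleton (hx : x ≠ 0) (h : x ∈ ℝ ∙ y) :
    normalize y = normalize x ∨ normalize y = -normalize x := by
  obtain ⟨c, rfl⟩ := Submodule.mem_span_singleton.1 h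
  rcases (left_ne_zero_of_smul hx).lt_or_gt with hneg | hpos
  · exact .inr (by rw [normalize_smul_of_neg hneg, neg_neg])
  · exact .inl (normalize_smul_of_pos hpos y).symm

theorem isAligned_of_forall_mem_span_singleton (hv : ∀ i, ‖v i‖ = 1) (hx : x ≠ 0)
    (h : ∀ i, x ∈ ℝ ∙ v i) : IsAligned v := by
  refine ⟨normalize x, norm_normalize hx, fun i ↦ ?_⟩
  rw [← normalize_eq_self_of_norm_eq_one (hv i)]
  exact normalize_eq_or_eq_neg_of_mem_span_singleton hx (h i)

theorem IsAligned.span_range_le (hv : IsAligned v) (i : ι) :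
    Submodule.span ℝ (Set.range v) ≤ ℝ ∙ v i := by
  obtain ⟨w, -, hw⟩ := hv
  have hline j : (ℝ ∙ v j) = ℝ ∙ w := by
    rcases hw j with h | h
    · rw [h]
    · rw [h, ← Set.neg_singleton, Submodule.span_neg]
  rw [Submodule.span_range_eq_iSup]
  exact iSup_le fun j ↦ ((hline j).trans (hline i).symm).le

end Aligned

section WorkMap

variable {ι V : Type*} [Fintype ι] [NormedAddCommGroup V] [NormedSpace ℝ V]

/-- The work map `φ` of the open chain with link lengths `ℓ`: the position of its free end when the
links point in the directions `u i`. -/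
def workMap (ℓ : ι → ℝ) (u : ι → sphere (0 : V) 1) : V :=
  ∑ i, ℓ i • (u i : V)

theorem workMap_mem_span_range (ℓ : ι → ℝ) (u : ι → sphere (0 : V) 1) :
    workMap ℓ u ∈ Submodule.span ℝ (Set.range fun i ↦ (u i : V)) :=
  Submodule.sum_smul_mem _ _ fun i _ ↦ Submodule.subset_span ⟨i, rfl⟩

end WorkMap

section CriticalPoints

variable {ι E : Type*} [Fintype ι] [NormedAddCommGroup E] [InnerProductSpace ℝ E]
  {n : ℕ} [Fact (Module.finrank ℝ E = n + 1)]

theorem hasMFDerivAt_coe_sphere (u : sphere (0 : E) 1) :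
    HasMFDerivAt (𝓡 n) 𝓘(ℝ, E) ((↑) : sphere (0 : E) 1 → E) u
      (mvfderiv (𝓡 n) ((↑) : sphere (0 : E) 1 → E) u) :=
  ((contMDiff_coe_sphere (m := 1) u).mdifferentiableAt one_ne_zero).hasMFDerivAt

theorem hasMFDerivAt_workMap (ℓ : ι → ℝ) (u : ι → sphere (0 : E) 1) :
    HasMFDerivAt (ModelWithCorners.pi fun _ : ι ↦ 𝓡 n) 𝓘(ℝ, E) (workMap ℓ) u
      (∑ i, (ℓ i • mvfderiv (𝓡 n) ((↑) : sphere (0 : E) 1 → E) (u i) :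
        EuclideanSpace ℝ (Fin n) →L[ℝ] E) ∘L ContinuousLinearMap.proj i) :=
  hasMFDerivAt_sum_eval fun i ↦ (hasMFDerivAt_coe_sphere (u i)).const_smul (ℓ i)

theorem mfderiv_norm_sq_workMap_eq_zero_iff {ℓ : ι → ℝ} (hℓ : ∀ i, ℓ i ≠ 0)
    (u : ι → sphere (0 : E) 1) :
    mfderiv (ModelWithCorners.pi fun _ : ι ↦ 𝓡 n) 𝓘(ℝ, ℝ)
        (fun v : ι → sphere (0 : E) 1 ↦ ‖workMap ℓ v‖ ^ 2) u = 0 ↔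
      ∀ i, workMap ℓ u ∈ ℝ ∙ (u i : E) := by
  refine (mfderiv_norm_sq_eq_zero_iff (hasMFDerivAt_workMap ℓ u)).trans
    (mem_orthogonal_range_sum_comp_proj_iff.trans (forall_congr' fun i ↦ ?_))
  have hrange : (ℓ i • mvfderiv (𝓡 n) ((↑) : sphere (0 : E) 1 → E) (u i)).range =
      (ℝ ∙ (u i : E))ᗮ :=
    (LinearMap.range_smul _ _ (hℓ i)).trans (range_mvfderiv_subtypeVal (u i))
  rw [hrange, Submodule.orthogonal_orthogonal]

theorem stmt_3_general {ℓ : ι → ℝ} (hℓ : ∀ i, ℓ i ≠ 0) {u : ι → sphere (0 : E) 1}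
    (hne : workMap ℓ u ≠ 0) :
    mfderiv (ModelWithCorners.pi fun _ : ι ↦ 𝓡 n) 𝓘(ℝ, ℝ)
        (fun v : ι → sphere (0 : E) 1 ↦ ‖workMap ℓ v‖ ^ 2) u = 0 ↔
      IsAligned fun i ↦ (u i : E) := by
  rw [mfderiv_norm_sq_workMap_eq_zero_iff hℓ]
  exact ⟨isAligned_of_forall_mem_span_singleton (fun i ↦ norm_eq_of_mem_sphere (u i)) hne,
    fun h i ↦ h.span_range_le i (workMap_mem_span_range ℓ u)⟩

end CriticalPoints

theorem stmt_3 (d k : ℕ) (hd : 2 ≤ d) (hk : 1 ≤ k)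
    [Fact (Module.finrank ℝ (EuclideanSpace ℝ (Fin d)) = (d - 1) + 1)]
    (ℓ : Fin k → ℝ) (hℓ : ∀ i, 0 < ℓ i)
    (u : Fin k → (sphere (0 : EuclideanSpace ℝ (Fin d)) 1))
    (hne : (∑ i, ℓ i • (u i : EuclideanSpace ℝ (Fin d))) ≠ 0) :
    mfderiv (ModelWithCorners.pi (fun _ : Fin k => (𝓡 (d - 1)))) (𝓘(ℝ, ℝ))
        (fun v : Fin k → (sphere (0 : EuclideanSpace ℝ (Fin d)) 1) =>
          ‖∑ i, ℓ i • (v i : EuclideanSpace ℝ (Fin d))‖ ^ 2) u = 0 ↔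
      ∃ w : EuclideanSpace ℝ (Fin d), ‖w‖ = 1 ∧
        ∀ i, (u i : EuclideanSpace ℝ (Fin d)) = w ∨
          (u i : EuclideanSpace ℝ (Fin d)) = -w :=
  stmt_3_general (fun i ↦ (hℓ i).ne') hne
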